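/- A graph contains no K_{3,3} immersion if and only if it can be obtained from internally 4-edge-connected K_{3,3}-immersion-free graphs by repeatedly applying: joins on vertices of degree at most three, disjoint unions, subdividing edges, and adding pendant vertices joined by single or double edges. -/

import Mathlib

/-- A finite multigraph without loops: vertices `V`, edges `E`,
each edge has an unordered pair of distinct endpoints. -/
structure Multigraph where
  V : Type
  E : Type
  [fV : Fintype V]
  [fE : Fintype E]
  [dV : DecidableEq V]
  [dE : DecidableEq E]
  ends : E → Sym2 V
  noLoop : ∀ e, ¬ (ends e).IsDiag

attribute [instance] Multigraph.fV Multigraph.fE Multigraph.dV Multigraph.dE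

namespace Multigraph

/-- Walks in a multigraph. -/
inductive Walk (G : Multigraph) : G.V → G.V → Type
  | nil (v : G.V) : Walk G v v
  | cons {u v w : G.V} (e : G.E) (h : G.ends e = s(u, v)) (p : Walk G v w) : Walk G u w

/-- The list of edges traversed by a walk. -/
def Walk.edges {G : Multigraph} : {u v : G.V} → G.Walk u v → List G.E
  | _, _, .nil _ => []
  | _, _, .cons e _ p => e :: p.edges

/-- The list of vertices visited by a walk. -/
def Walk.support {G : Multigraph} : {u v : G.V} → G.Walk u v → List G.V
  | u, _, .nil _ => [u]
  | u, _, .cons _ _ p => u :: p.support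

/-- A walk is a path if it visits no vertex twice. -/
def Walk.IsPath {G : Multigraph} {u v : G.V} (p : G.Walk u v) : Prop := p.support.Nodup

/-- Data of an immersion of `H` into `G`: an injective map on vertices and,
for each edge of `H`, a path in `G` joining the images of its endpoints,
the paths being pairwise edge-disjoint. -/
structure ImmersionData (H G : Multigraph) where
  vmap : H.V → G.V
  inj : Function.Injective vmap
  pstart : H.E → G.V
  pend : H.E → G.V
  walk : ∀ e, G.Walk (pstart e) (pend e)
  ends_eq : ∀ e, s(pstart e, pend e) = (H.ends e).map vmap
  isPath : ∀ e, (walk e).IsPath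
  edgeDisj : ∀ e e', e ≠ e' → List.Disjoint (walk e).edges (walk e').edges

/-- `H` immerses in `G`. -/
def Immerses (H G : Multigraph) : Prop := Nonempty (ImmersionData H G)

/-- Data witnessing that `G` contains a subdivision of `H` as a subgraph
(i.e. `H` is a topological minor of `G`): as an immersion, but moreover the
paths may only meet at images of common endpoints. -/
structure SubdivisionData (H G : Multigraph) extends ImmersionData H G where
  vtxDisj : ∀ e e', e ≠ e' → ∀ x, x ∈ (walk e).support → x ∈ (walk e').support →
    ∃ w, x = vmap w ∧ w ∈ H.ends e ∧ w ∈ H.ends e'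

/-- `G` contains a subdivision of `H` as a subgraph. -/
def ContainsSubdivision (H G : Multigraph) : Prop := Nonempty (SubdivisionData H G)

/-- The complete bipartite graph `K_{3,3}`. -/
def K33 : Multigraph where
  V := Fin 3 ⊕ Fin 3
  E := Fin 3 × Fin 3
  ends e := s(Sum.inl e.1, Sum.inr e.2)
  noLoop e := by simp [Sym2.mk_isDiag_iff]

/-- The complete graph `K_5`. -/
def K5 : Multigraph where
  V := Fin 5
  E := {p : Fin 5 × Fin 5 // p.1 < p.2}
  ends e := s(e.1.1, e.1.2)
  noLoop e := by simpa [Sym2.mk_isDiag_iff] using e.2.ne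

variable (G : Multigraph)

/-- The degree of a vertex: the number of incident edges. -/
def deg (v : G.V) : ℕ := (Finset.univ.filter fun e => v ∈ G.ends e).card

/-- The multiplicity of the (possible) edge between `u` and `v`. -/
def mult (u v : G.V) : ℕ := (Finset.univ.filter fun e => G.ends e = s(u, v)).card

/-- The edge cut determined by a set `A` of vertices. -/
def cut (A : Finset G.V) : Finset G.E :=
  Finset.univ.filter fun e => ∃ u ∈ A, ∃ v ∈ Aᶜ, G.ends e = s(u, v)

/-- Every edge cut of `G` has at least `k` edges. -/
def EdgeConnGe (k : ℕ) : Prop :=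
  ∀ A : Finset G.V, A.Nonempty → A ≠ Finset.univ → k ≤ (G.cut A).card

/-- Internally 4-edge-connected: 3-edge-connected and every 3-edge cut has a
side consisting of a single vertex. -/
def Internally4EC : Prop :=
  G.EdgeConnGe 3 ∧ ∀ A : Finset G.V, A.Nonempty → A ≠ Finset.univ →
    (G.cut A).card = 3 → A.card = 1 ∨ Aᶜ.card = 1

/-- Weakly 5-edge-connected: internally 4-edge-connected and every 4-edge cut
has a side with at most two vertices. -/
def Weakly5EC : Prop :=
  G.Internally4EC ∧ ∀ A : Finset G.V, A.Nonempty → A ≠ Finset.univ →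
    (G.cut A).card = 4 → A.card ≤ 2 ∨ Aᶜ.card ≤ 2

/-- `G` is `d`-regular. -/
def IsRegular (d : ℕ) : Prop := ∀ v, G.deg v = d

/-- `G` is connected. -/
def Connected : Prop := ∀ u v : G.V, Nonempty (G.Walk u v)

/-- `v` is a cut-vertex: the remaining vertices split into two nonempty parts
with no edge between them. -/
def IsCutVertex (v : G.V) : Prop :=
  ∃ C D : Finset G.V, C.Nonempty ∧ D.Nonempty ∧ Disjoint C D ∧ v ∉ C ∧ v ∉ D ∧
    (∀ x : G.V, x ∈ C ∪ D ∨ x = v) ∧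
    ∀ e : G.E, ¬ ∃ u ∈ C, ∃ w ∈ D, G.ends e = s(u, w)

/-- `G` is 2-connected. -/
def TwoConnected : Prop :=
  G.Connected ∧ 3 ≤ Fintype.card G.V ∧ ∀ v, ¬ G.IsCutVertex v

/-- Planarity, via Kuratowski's characterization: no subdivision of `K_5`
nor of `K_{3,3}` as a subgraph. -/
def Planar : Prop := ¬ ContainsSubdivision K5 G ∧ ¬ ContainsSubdivision K33 G

end Multigraph

lemma Sym2.isDiag_map_iff' {α β : Type*} {f : α → β} (hf : Function.Injective f)
    (s : Sym2 α) : (s.map f).IsDiag ↔ s.IsDiag := by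
  induction s using Sym2.ind with
  | _ x y => simp [Sym2.mk_isDiag_iff, hf.eq_iff]

namespace Multigraph

/-- The join of `H1` and `H2` on vertices `v1` and `v2`: remove `v1` and `v2`
and match up their incident edges via the bijection `π`, joining the
corresponding other endpoints. -/
def joinGraph (H1 H2 : Multigraph) (v1 : H1.V) (v2 : H2.V)
    (π : {e : H1.E // v1 ∈ H1.ends e} ≃ {e : H2.E // v2 ∈ H2.ends e}) :
    Multigraph where
  V := {x : H1.V // x ≠ v1} ⊕ {x : H2.V // x ≠ v2}
  E := {e : H1.E // v1 ∉ H1.ends e} ⊕ {e : H2.E // v2 ∉ H2.ends e}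
       ⊕ {e : H1.E // v1 ∈ H1.ends e}
  ends e := match e with
    | .inl e => ((H1.ends e.1).attachWith (P := fun x => x ≠ v1)
        (fun _ hx hEq => e.2 (hEq ▸ hx))).map Sum.inl
    | .inr (.inl e) => ((H2.ends e.1).attachWith (P := fun x => x ≠ v2)
        (fun _ hx hEq => e.2 (hEq ▸ hx))).map Sum.inr
    | .inr (.inr e) =>
        s(Sum.inl ⟨Sym2.Mem.other' e.2, fun hEq => H1.noLoop e.1
            (by rw [← Sym2.other_spec' e.2, hEq]; exact Sym2.mk_isDiag_iff.mpr rfl)⟩,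
          Sum.inr ⟨Sym2.Mem.other' (π e).2, fun hEq => H2.noLoop (π e).1
            (by rw [← Sym2.other_spec' (π e).2, hEq]; exact Sym2.mk_isDiag_iff.mpr rfl)⟩)
  noLoop e := match e with
    | .inl e => by
        intro hd
        apply H1.noLoop e.1
        rw [← Sym2.attachWith_map_subtypeVal (s := H1.ends e.1) (P := fun x => x ≠ v1) (fun _ hx hEq => e.2 (hEq ▸ hx))]
        exact (Sym2.isDiag_map_iff' Subtype.val_injective _).mpr
          ((Sym2.isDiag_map_iff' Sum.inl_injective _).mp hd)
    | .inr (.inl e) => by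
        intro hd
        apply H2.noLoop e.1
        rw [← Sym2.attachWith_map_subtypeVal (s := H2.ends e.1) (P := fun x => x ≠ v2) (fun _ hx hEq => e.2 (hEq ▸ hx))]
        exact (Sym2.isDiag_map_iff' Subtype.val_injective _).mpr
          ((Sym2.isDiag_map_iff' Sum.inr_injective _).mp hd)
    | .inr (.inr e) => by simp [Sym2.mk_isDiag_iff]

end Multigraph

namespace Multigraph

/-- Disjoint union of two multigraphs. -/
def disjUnion (G1 G2 : Multigraph) : Multigraph where
  V := G1.V ⊕ G2.V
  E := G1.E ⊕ G2.E
  ends e := match e with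
    | .inl e => (G1.ends e).map Sum.inl
    | .inr e => (G2.ends e).map Sum.inr
  noLoop e := match e with
    | .inl e => fun hd => G1.noLoop e ((Sym2.isDiag_map_iff' Sum.inl_injective _).mp hd)
    | .inr e => fun hd => G2.noLoop e ((Sym2.isDiag_map_iff' Sum.inr_injective _).mp hd)

/-- Subdividing the edge `e0` (with endpoints `a`, `b`): replace it by a new
vertex joined to `a` and to `b`. -/
def subdivide (G : Multigraph) (e0 : G.E) (a b : G.V) (hab : G.ends e0 = s(a, b)) :
    Multigraph where
  V := G.V ⊕ Unit
  E := {e : G.E // e ≠ e0} ⊕ Bool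
  ends e := match e with
    | .inl e => (G.ends e.1).map Sum.inl
    | .inr true => s(Sum.inl a, Sum.inr ())
    | .inr false => s(Sum.inl b, Sum.inr ())
  noLoop e := match e with
    | .inl e => fun hd => G.noLoop e.1 ((Sym2.isDiag_map_iff' Sum.inl_injective _).mp hd)
    | .inr true => by simp [Sym2.mk_isDiag_iff]
    | .inr false => by simp [Sym2.mk_isDiag_iff]

/-- Adding a pendant vertex joined to `u` by `k` parallel edges. -/
def addPendant (G : Multigraph) (u : G.V) (k : ℕ) : Multigraph where
  V := G.V ⊕ Unit
  E := G.E ⊕ Fin k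
  ends e := match e with
    | .inl e => (G.ends e).map Sum.inl
    | .inr _ => s(Sum.inl u, Sum.inr ())
  noLoop e := match e with
    | .inl e => fun hd => G.noLoop e ((Sym2.isDiag_map_iff' Sum.inl_injective _).mp hd)
    | .inr _ => by simp [Sym2.mk_isDiag_iff]

/-- Isomorphism of multigraphs. -/
structure Iso (G1 G2 : Multigraph) where
  vequiv : G1.V ≃ G2.V
  eequiv : G1.E ≃ G2.E
  ends_eq : ∀ e, G2.ends (eequiv e) = (G1.ends e).map vequiv

/-- The graphs obtainable (up to isomorphism) from internally 4-edge-connected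
`K_{3,3}`-immersion-free graphs by repeatedly applying: joins on vertices of
degree at most three, disjoint unions, subdividing edges, and adding pendant
vertices joined by single or double edges. -/
inductive Built : Multigraph → Prop
  | base (G : Multigraph) : G.Internally4EC → ¬ Immerses K33 G → Built G
  | join (H1 H2 : Multigraph) (v1 : H1.V) (v2 : H2.V)
      (π : {e : H1.E // v1 ∈ H1.ends e} ≃ {e : H2.E // v2 ∈ H2.ends e}) :
      3 ≤ Fintype.card H1.V → 3 ≤ Fintype.card H2.V →
      H1.deg v1 ≤ 3 → H2.deg v2 ≤ 3 →
      Built H1 → Built H2 → Built (joinGraph H1 H2 v1 v2 π)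
  | union (G1 G2 : Multigraph) : Built G1 → Built G2 → Built (disjUnion G1 G2)
  | subdiv (G : Multigraph) (e0 : G.E) (a b : G.V) (hab : G.ends e0 = s(a, b)) :
      Built G → Built (subdivide G e0 a b hab)
  | pendant (G : Multigraph) (u : G.V) (k : ℕ) : k = 1 ∨ k = 2 →
      Built G → Built (addPendant G u k)
  | iso (G1 G2 : Multigraph) : Built G1 → Iso G1 G2 → Built G2

end Multigraph

namespace Multigraph

/-- Reachability using only edges in `S`. -/
def Reach (G : Multigraph) (S : Set G.E) (u v : G.V) : Prop :=
  Relation.ReflTransGen (fun a b => ∃ e ∈ S, G.ends e = s(a, b)) u v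

lemma Reach.refl {G : Multigraph} {S : Set G.E} (u : G.V) : Reach G S u u :=
  Relation.ReflTransGen.refl

lemma Reach.trans {G : Multigraph} {S : Set G.E} {u v w : G.V}
    (h : Reach G S u v) (h' : Reach G S v w) : Reach G S u w :=
  Relation.ReflTransGen.trans h h'

lemma Reach.single {G : Multigraph} {S : Set G.E} {u v : G.V} {e : G.E} (he : e ∈ S)
    (h : G.ends e = s(u, v)) : Reach G S u v :=
  Relation.ReflTransGen.single ⟨e, he, h⟩

lemma Reach.symm {G : Multigraph} {S : Set G.E} {u v : G.V}
    (h : Reach G S u v) : Reach G S v u := by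
  induction h with
  | refl => exact .refl _
  | tail _ h ih =>
    obtain ⟨e, he, h⟩ := h
    exact (Reach.single he (h.trans Sym2.eq_swap)).trans ih

lemma Reach.mono {G : Multigraph} {S T : Set G.E} (hST : S ⊆ T) {u v : G.V}
    (h : Reach G S u v) : Reach G T u v := by
  induction h with
  | refl => exact .refl _
  | tail _ h ih =>
    obtain ⟨e, he, h⟩ := h
    exact ih.trans (.single (hST he) h)

lemma Reach.exists_cross {G : Multigraph} {S : Set G.E} {u v : G.V}
    (h : Reach G S u v) (p : G.V → Prop) (hu : p u) (hv : ¬ p v) :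
    ∃ e ∈ S, ∃ a b, G.ends e = s(a, b) ∧ p a ∧ ¬ p b := by
  induction h with
  | refl => exact absurd hu hv
  | @tail b c _ h ih =>
    by_cases hb : p b
    · obtain ⟨e, he, h⟩ := h
      exact ⟨e, he, b, c, h, hb, hv⟩
    · exact ih hb

lemma Walk.reach {G : Multigraph} {u v : G.V} (p : G.Walk u v) :
    Reach G {e | e ∈ p.edges} u v := by
  induction p with
  | nil v => exact .refl _
  | cons e h p ih =>
    refine (Reach.single (by simp [Walk.edges]) h).trans (ih.mono ?_)
    intro f hf
    simp only [Set.mem_ofPred_eq, Walk.edges, List.mem_cons] at *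
    exact Or.inr hf

lemma Walk.start_mem {G : Multigraph} {u v : G.V} (p : G.Walk u v) : u ∈ p.support := by
  cases p <;> simp [Walk.support]

lemma Walk.mem_support_of_edge {G : Multigraph} {u v : G.V} (p : G.Walk u v) {e : G.E}
    (he : e ∈ p.edges) {x : G.V} (hx : x ∈ G.ends e) : x ∈ p.support := by
  induction p with
  | nil v => simp [Walk.edges] at he
  | cons f h p ih =>
    simp only [Walk.edges, List.mem_cons, Walk.support] at *
    rcases he with rfl | he
    · rw [h, Sym2.mem_iff] at hx
      rcases hx with rfl | rfl
      · exact Or.inl rfl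
      · exact Or.inr p.start_mem
    · exact Or.inr (ih he)

lemma Walk.edges_nodup {G : Multigraph} {u v : G.V} (p : G.Walk u v) (hp : p.IsPath) :
    p.edges.Nodup := by
  induction p with
  | nil v => simp [Walk.edges]
  | @cons u _ _ f h p ih =>
    simp only [Walk.IsPath, Walk.support, List.nodup_cons, Walk.edges] at *
    refine ⟨fun hf => hp.1 (p.mem_support_of_edge hf (by rw [h]; simp)), ih hp.2⟩

lemma Walk.split {G : Multigraph} {u v : G.V} (p : G.Walk u v) {x : G.V}
    (hx : x ∈ p.support) : ∃ (q : G.Walk u x) (r : G.Walk x v),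
      p.edges = q.edges ++ r.edges ∧ r.support <:+ p.support := by
  induction p with
  | nil v =>
    simp only [Walk.support, List.mem_singleton] at hx
    subst hx
    exact ⟨.nil _, .nil _, by simp [Walk.edges], List.suffix_refl _⟩
  | @cons u _ _ f h p ih =>
    by_cases hxu : x = u
    · subst hxu
      exact ⟨.nil _, .cons f h p, by simp [Walk.edges], List.suffix_refl _⟩
    · simp only [Walk.support, List.mem_cons, hxu, false_or] at hx
      obtain ⟨q, r, h1, h2⟩ := ih hx
      exact ⟨.cons f h q, r, by simp [Walk.edges, h1], h2.trans (List.suffix_cons _ _)⟩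

lemma Reach.exists_path {G : Multigraph} {S : Set G.E} {u v : G.V} (h : Reach G S u v) :
    ∃ p : G.Walk u v, p.IsPath ∧ ∀ e ∈ p.edges, e ∈ S := by
  induction h using Relation.ReflTransGen.head_induction_on with
  | refl => exact ⟨.nil _, by simp [Walk.IsPath, Walk.support], by simp [Walk.edges]⟩
  | @head a c h _ ih =>
    obtain ⟨e, he, h⟩ := h
    obtain ⟨p, hp, hS⟩ := ih
    by_cases ha : a ∈ p.support
    · obtain ⟨q, r, h1, h2⟩ := p.split ha
      exact ⟨r, hp.sublist h2.sublist, fun f hf => hS f (by simp [h1, hf])⟩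
    · refine ⟨.cons e h p, ?_, ?_⟩
      · exact List.nodup_cons.mpr ⟨ha, hp⟩
      · intro f hf
        simp only [Walk.edges, List.mem_cons] at hf
        rcases hf with rfl | hf
        · exact he
        · exact hS f hf

/-- Edge-set version of the path system of an immersion. -/
def Imm (H G : Multigraph) (vm : H.V → G.V) (S : H.E → Set G.E) : Prop :=
  (∀ e e', e ≠ e' → Disjoint (S e) (S e')) ∧
    ∀ e a b, H.ends e = s(a, b) → Reach G (S e) (vm a) (vm b)

lemma immerses_iff {H G : Multigraph} :
    Immerses H G ↔ ∃ vm S, Function.Injective vm ∧ Imm H G vm S := by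
  constructor
  · rintro ⟨I⟩
    refine ⟨I.vmap, fun e => {f | f ∈ (I.walk e).edges}, I.inj, ?_, ?_⟩
    · intro e e' hne
      rw [Set.disjoint_left]
      intro f hf hf'
      exact I.edgeDisj e e' hne hf hf'
    · intro e a b h
      have h1 := I.ends_eq e
      have h2 := (I.walk e).reach
      rw [h, Sym2.map_mk, Sym2.eq_iff] at h1
      rcases h1 with ⟨h1, h3⟩ | ⟨h1, h3⟩
      · rw [← h1, ← h3]; exact h2
      · rw [← h1, ← h3]; exact h2.symm
  · rintro ⟨vm, S, hinj, hd, hr⟩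
    have key : ∀ e, ∃ a b, H.ends e = s(a, b) := fun e => by
      induction h : H.ends e using Sym2.ind with
      | _ x y => exact ⟨x, y, rfl⟩
    choose a b hab using key
    choose p hp hS using fun e => (hr e (a e) (b e) (hab e)).exists_path
    refine ⟨⟨vm, hinj, fun e => vm (a e), fun e => vm (b e), p, ?_, hp, ?_⟩⟩
    · intro e; rw [hab e, Sym2.map_mk]
    · intro e e' hne f hf hf'
      exact Set.disjoint_left.mp (hd e e' hne) (hS e f hf) (hS e' f hf')

lemma Imm.comp {H G' G : Multigraph} {vm : H.V → G'.V} {S : H.E → Set G'.E}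
    (hI : Imm H G' vm S) (φ : G'.V → G.V) (W : G'.E → Set G.E)
    (hφ : Function.Injective (φ ∘ vm)) (hW : Imm G' G φ W) : Immerses H G := by
  refine immerses_iff.mpr ⟨φ ∘ vm, fun e => ⋃ f ∈ S e, W f, hφ, ?_, ?_⟩
  · intro e e' hne
    rw [Set.disjoint_left]
    intro g hg hg'
    simp only [Set.mem_iUnion] at hg hg'
    obtain ⟨f, hf, hg⟩ := hg
    obtain ⟨f', hf', hg'⟩ := hg'
    have : f ≠ f' := by
      rintro rfl
      exact Set.disjoint_left.mp (hI.1 e e' hne) hf hf'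
    exact Set.disjoint_left.mp (hW.1 f f' this) hg hg'
  · intro e a b h
    have := hI.2 e a b h
    show Reach G _ (φ (vm a)) (φ (vm b))
    generalize vm a = x at this
    generalize vm b = y at this
    induction this with
    | refl => exact .refl _
    | tail _ h ih =>
      obtain ⟨f, hf, h⟩ := h
      refine ih.trans ((hW.2 f _ _ h).mono ?_)
      intro g hg
      simp only [Set.mem_iUnion]
      exact ⟨f, hf, hg⟩

lemma Immerses.comp {H G' G : Multigraph} (hI : Immerses H G') (φ : G'.V → G.V)
    (W : G'.E → Set G.E) (hφ : Function.Injective φ) (hW : Imm G' G φ W) : Immerses H G := by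
  obtain ⟨vm, S, hi, hI⟩ := immerses_iff.mp hI
  exact hI.comp φ W (hφ.comp hi) hW

/-- Singletons (and empty sets) given by a partial injection. -/
lemma imm_of_partial {G' G : Multigraph} (φ : G'.V → G.V) (w : G'.E → Option G.E)
    (hw : ∀ e e' f, w e = some f → w e' = some f → e = e')
    (h0 : ∀ e a b, G'.ends e = s(a, b) → w e = none → φ a = φ b)
    (h1 : ∀ e f, w e = some f → G.ends f = (G'.ends e).map φ) :
    Imm G' G φ (fun e => {f | w e = some f}) := by
  refine ⟨?_, ?_⟩
  · intro e e' hne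
    rw [Set.disjoint_left]
    intro f hf hf'
    exact hne (hw e e' f hf hf')
  · intro e a b h
    rcases hwe : w e with _ | f
    · rw [h0 e a b h hwe]; exact .refl _
    · refine Reach.single (e := f) hwe ?_
      rw [h1 e f hwe, h, Sym2.map_mk]

lemma k33_dec : ∀ f g : Fin 3 → Bool,
    ((Finset.univ : Finset (Fin 3 × Fin 3)).filter (fun e => f e.1 ≠ g e.2)).card ≤ 3 →
      ((∀ i j, f i = false → f j = false → i = j) ∧ (∀ i j, g i = false → g j = false → i = j)
        ∧ (∀ i j, f i = false → g j = true)) ∨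
      ((∀ i j, f i = true → f j = true → i = j) ∧ (∀ i j, g i = true → g j = true → i = j)
        ∧ (∀ i j, f i = true → g j = false)) := by
  decide

lemma k33_dec2 : ∀ f g : Fin 3 → Bool,
    ((Finset.univ : Finset (Fin 3 × Fin 3)).filter (fun e => f e.1 ≠ g e.2)).card ≤ 2 →
      ((∀ i, f i = true) ∧ (∀ i, g i = true)) ∨ ((∀ i, f i = false) ∧ (∀ i, g i = false)) := by
  decide

open Classical in
lemma k33_card {G : Multigraph} {vm : K33.V → G.V} {S : K33.E → Set G.E} (hI : Imm K33 G vm S)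
    (p : G.V → Prop) (F : Finset G.E)
    (hF : ∀ e u v, G.ends e = s(u, v) → p u → ¬ p v → e ∈ F) :
    ((Finset.univ : Finset (Fin 3 × Fin 3)).filter
      (fun e => decide (p (vm (Sum.inl e.1))) ≠ decide (p (vm (Sum.inr e.2))))).card ≤ F.card := by
  have key : ∀ e : Fin 3 × Fin 3,
      decide (p (vm (Sum.inl e.1))) ≠ decide (p (vm (Sum.inr e.2))) →
      ∃ f ∈ S e, f ∈ F := by
    intro e he
    have hr := hI.2 e (Sum.inl e.1) (Sum.inr e.2) rfl
    by_cases h1 : p (vm (Sum.inl e.1))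
    · have h2 : ¬ p (vm (Sum.inr e.2)) := by simpa [h1] using he
      obtain ⟨f, hf, a, b, hab, ha, hb⟩ := hr.exists_cross p h1 h2
      exact ⟨f, hf, hF f a b hab ha hb⟩
    · have h2 : p (vm (Sum.inr e.2)) := by simpa [h1] using he
      obtain ⟨f, hf, a, b, hab, ha, hb⟩ := hr.symm.exists_cross p h2 h1
      exact ⟨f, hf, hF f a b hab ha hb⟩
  rcases isEmpty_or_nonempty G.E with hE | hE
  · rw [Finset.card_eq_zero.mpr]
    · exact Nat.zero_le _
    · refine Finset.eq_empty_of_forall_notMem fun e he => ?_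
      obtain ⟨f, -⟩ := key e (Finset.mem_filter.mp he).2
      exact hE.elim f
  choose! g hg hgF using key
  refine Finset.card_le_card_of_injOn g ?_ ?_
  · intro e he
    simp only [Finset.coe_filter, Set.mem_ofPred_eq, Finset.mem_univ, true_and] at he
    exact hgF e he
  · intro e he e' he' hee
    simp only [Finset.coe_filter, Set.mem_ofPred_eq, Finset.mem_univ, true_and] at he he'
    by_contra hne
    refine Set.disjoint_left.mp (hI.1 e e' hne) (hg e he) ?_
    rw [hee]; exact hg e' he'

lemma k33_cut3 {G : Multigraph} {vm : K33.V → G.V} {S : K33.E → Set G.E} (hI : Imm K33 G vm S)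
    (p : G.V → Prop) (F : Finset G.E)
    (hF : ∀ e u v, G.ends e = s(u, v) → p u → ¬ p v → e ∈ F) (hc : F.card ≤ 3) :
    (∀ a b, ¬ p (vm a) → ¬ p (vm b) → a = b) ∨ (∀ a b, p (vm a) → p (vm b) → a = b) := by
  classical
  have h := k33_dec (fun i => decide (p (vm (Sum.inl i)))) (fun i => decide (p (vm (Sum.inr i))))
    (le_trans (by convert k33_card hI p F hF) hc)
  simp only [decide_eq_false_iff_not, decide_eq_true_eq] at h
  rcases h with ⟨h1, h2, h3⟩ | ⟨h1, h2, h3⟩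
  · left
    rintro (a | a) (b | b) ha hb
    · rw [h1 a b ha hb]
    · exact absurd (h3 a b ha) hb
    · exact absurd (h3 b a hb) ha
    · rw [h2 a b ha hb]
  · right
    rintro (a | a) (b | b) ha hb
    · rw [h1 a b ha hb]
    · exact absurd hb (h3 a b ha)
    · exact absurd ha (h3 b a hb)
    · rw [h2 a b ha hb]

lemma k33_cut2 {G : Multigraph} {vm : K33.V → G.V} {S : K33.E → Set G.E} (hI : Imm K33 G vm S)
    (p : G.V → Prop) (F : Finset G.E)
    (hF : ∀ e u v, G.ends e = s(u, v) → p u → ¬ p v → e ∈ F) (hc : F.card ≤ 2) :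
    (∀ a, p (vm a)) ∨ (∀ a, ¬ p (vm a)) := by
  classical
  have h := k33_dec2 (fun i => decide (p (vm (Sum.inl i)))) (fun i => decide (p (vm (Sum.inr i))))
    (le_trans (by convert k33_card hI p F hF) hc)
  simp only [decide_eq_false_iff_not, decide_eq_true_eq] at h
  rcases h with ⟨h1, h2⟩ | ⟨h1, h2⟩
  · left
    rintro (a | a)
    · exact h1 a
    · exact h2 a
  · right
    rintro (a | a)
    · exact h1 a
    · exact h2 a

end Multigraph
namespace Multigraph

lemma exists_ends (G : Multigraph) (e : G.E) : ∃ a b, G.ends e = s(a, b) := by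
  induction h : G.ends e using Sym2.ind with
  | _ x y => exact ⟨x, y, rfl⟩

lemma map_inl_elim {α β : Type} (g : β → α) (s : Sym2 α) :
    s = (s.map (Sum.inl : α → α ⊕ β)).map (Sum.elim id g) := by
  induction s using Sym2.ind with
  | _ x y => rfl

lemma map_inr_elim {α β : Type} (g : β → α) (s : Sym2 α) :
    s = (s.map (Sum.inr : α → β ⊕ α)).map (Sum.elim g id) := by
  induction s using Sym2.ind with
  | _ x y => rfl

lemma inr_notMem_map {α β : Type} (s : Sym2 α) (b : β) :
    (Sum.inr b : α ⊕ β) ∉ s.map Sum.inl := by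
  induction s using Sym2.ind with
  | _ x y => simp

lemma free_iso {G1 G2 : Multigraph} (h : ¬ Immerses K33 G1) (i : Iso G1 G2) :
    ¬ Immerses K33 G2 := by
  intro hI
  refine h (hI.comp i.vequiv.symm _ i.vequiv.symm.injective
    (imm_of_partial i.vequiv.symm (fun e => some (i.eequiv.symm e)) ?_ ?_ ?_))
  · intro e e' f h h'
    have := (Option.some.inj h).trans (Option.some.inj h').symm
    exact i.eequiv.symm.injective this
  · intro e a b _ h
    simp at h
  · intro e f h
    have h := Option.some.inj h
    subst h
    have h2 := i.ends_eq (i.eequiv.symm e)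
    rw [Equiv.apply_symm_apply] at h2
    rw [h2, Sym2.map_map]
    simp

lemma free_union {G1 G2 : Multigraph} (h1 : ¬ Immerses K33 G1) (h2 : ¬ Immerses K33 G2) :
    ¬ Immerses K33 (disjUnion G1 G2) := by
  intro hI
  obtain ⟨vm, S, hi, hI⟩ := immerses_iff.mp hI
  have hcut : ∀ (e : (disjUnion G1 G2).E) (u v : (disjUnion G1 G2).V),
      (disjUnion G1 G2).ends e = s(u, v) →
      Sum.isLeft u = true → ¬ Sum.isLeft v = true → e ∈ (∅ : Finset (disjUnion G1 G2).E) := by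
    rintro (e | e) u v h hu hv
    · obtain ⟨a, b, hab⟩ := G1.exists_ends e
      simp only [disjUnion, hab, Sym2.map_mk] at h
      have h := Sym2.eq_iff.mp h
      rcases h with ⟨rfl, rfl⟩ | ⟨rfl, rfl⟩ <;>
        first | exact absurd rfl hv | exact absurd hu Bool.false_ne_true
    · obtain ⟨a, b, hab⟩ := G2.exists_ends e
      simp only [disjUnion, hab, Sym2.map_mk] at h
      have h := Sym2.eq_iff.mp h
      rcases h with ⟨rfl, rfl⟩ | ⟨rfl, rfl⟩ <;>
        first | exact absurd rfl hv | exact absurd hu Bool.false_ne_true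
  rcases k33_cut2 hI (fun x => Sum.isLeft x = true) ∅ hcut (by simp) with h | h
  · obtain ⟨x0, -⟩ := Sum.isLeft_iff.mp (h (Sum.inl 0))
    let φ : (disjUnion G1 G2).V → G1.V := Sum.elim id (fun _ => x0)
    refine h1 (hI.comp φ _ ?_ (imm_of_partial φ (Sum.elim some (fun _ => none)) ?_ ?_ ?_))
    · intro a b hab
      obtain ⟨x, hx⟩ := Sum.isLeft_iff.mp (h a)
      obtain ⟨y, hy⟩ := Sum.isLeft_iff.mp (h b)
      apply hi
      simp only [Function.comp, hx, hy] at hab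
      rw [hx, hy]
      exact congrArg Sum.inl hab
    · rintro (e | e) (e' | e') f h h' <;> simp at h h'
      rw [h, h']
    · rintro (e | e) a b hab h
      · simp at h
      · obtain ⟨x, y, hxy⟩ := G2.exists_ends e
        simp only [disjUnion, hxy, Sym2.map_mk] at hab
        have hab := Sym2.eq_iff.mp hab
        rcases hab with ⟨rfl, rfl⟩ | ⟨rfl, rfl⟩ <;> rfl
    · rintro (e | e) f h <;> simp at h
      subst h
      exact map_inl_elim _ _
  · have h : ∀ a, Sum.isRight (vm a) = true := by
      intro a
      have := h a
      rcases hv : vm a with x | x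
      · rw [hv] at this; exact absurd rfl this
      · rfl
    obtain ⟨x0, -⟩ := Sum.isRight_iff.mp (h (Sum.inl 0))
    let φ : (disjUnion G1 G2).V → G2.V := Sum.elim (fun _ => x0) id
    refine h2 (hI.comp φ _ ?_ (imm_of_partial φ (Sum.elim (fun _ => none) some) ?_ ?_ ?_))
    · intro a b hab
      obtain ⟨x, hx⟩ := Sum.isRight_iff.mp (h a)
      obtain ⟨y, hy⟩ := Sum.isRight_iff.mp (h b)
      apply hi
      simp only [Function.comp, hx, hy] at hab
      rw [hx, hy]
      exact congrArg Sum.inr hab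
    · rintro (e | e) (e' | e') f h h' <;> simp at h h'
      rw [h, h']
    · rintro (e | e) a b hab h
      · obtain ⟨x, y, hxy⟩ := G1.exists_ends e
        simp only [disjUnion, hxy, Sym2.map_mk] at hab
        have hab := Sym2.eq_iff.mp hab
        rcases hab with ⟨rfl, rfl⟩ | ⟨rfl, rfl⟩ <;> rfl
      · simp at h
    · rintro (e | e) f h <;> simp at h
      subst h
      exact map_inr_elim _ _

lemma k33_no_small {G : Multigraph} {vm : K33.V → G.V} {S : K33.E → Set G.E}
    (hi : Function.Injective vm) (hI : Imm K33 G vm S)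
    (x : G.V) (F : Finset G.E) (hF : ∀ e, x ∈ G.ends e → e ∈ F) (hc : F.card ≤ 2) :
    ∀ a, vm a ≠ x := by
  rcases k33_cut2 hI (fun y => y = x) F (fun e u v h hu _ => hF e (by rw [h, ← hu]; simp)) hc
    with h | h
  · have := hi ((h (Sum.inl 0)).trans (h (Sum.inl 1)).symm)
    exact absurd (Sum.inl_injective this) (by decide)
  · exact h

lemma free_pendant {G : Multigraph} (u : G.V) (k : ℕ) (hk : k ≤ 2) (h : ¬ Immerses K33 G) :
    ¬ Immerses K33 (addPendant G u k) := by
  intro hI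
  obtain ⟨vm, S, hi, hI⟩ := immerses_iff.mp hI
  have hn := k33_no_small hi hI (Sum.inr ()) (Finset.univ.image (Sum.inr : Fin k → _)) (by
      rintro (e | e) he
      · exact absurd he (inr_notMem_map _ _)
      · exact Finset.mem_image_of_mem _ (Finset.mem_univ _)) (by
      refine Finset.card_image_le.trans ?_
      simpa using hk)
  let φ : (addPendant G u k).V → G.V := Sum.elim id (fun _ => u)
  refine h (hI.comp φ _ ?_ (imm_of_partial φ (Sum.elim some (fun _ => none)) ?_ ?_ ?_))
  · intro a b hab
    apply hi
    simp only [Function.comp] at hab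
    have ha := hn a
    have hb := hn b
    rcases h1 : vm a with x | x <;> rcases h2 : vm b with y | y
    · rw [h1, h2] at hab; exact congrArg Sum.inl hab
    · exact absurd h2 hb
    · exact absurd h1 ha
    · rfl
  · rintro (e | e) (e' | e') f h h' <;> simp at h h'
    rw [h, h']
  · rintro (e | e) a b hab h
    · simp at h
    · have hab := Sym2.eq_iff.mp hab
      rcases hab with ⟨rfl, rfl⟩ | ⟨rfl, rfl⟩ <;> rfl
  · rintro (e | e) f h <;> simp at h
    subst h
    exact map_inl_elim _ _

lemma free_subdivide {G : Multigraph} (e0 : G.E) (a b : G.V) (hab : G.ends e0 = s(a, b))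
    (h : ¬ Immerses K33 G) : ¬ Immerses K33 (subdivide G e0 a b hab) := by
  intro hI
  obtain ⟨vm, S, hi, hI⟩ := immerses_iff.mp hI
  have hn := k33_no_small hi hI (Sum.inr ()) (Finset.univ.image (Sum.inr : Bool → _)) (by
      rintro (e | e) he
      · exact absurd he (inr_notMem_map _ _)
      · exact Finset.mem_image_of_mem _ (Finset.mem_univ _)) (by
      refine Finset.card_image_le.trans ?_
      simp)
  let φ : (subdivide G e0 a b hab).V → G.V := Sum.elim id (fun _ => a)
  let w : (subdivide G e0 a b hab).E → Option G.E :=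
    Sum.elim (fun e => some e.1) (fun t => if t = true then none else some e0)
  refine h (hI.comp φ _ ?_ (imm_of_partial φ w ?_ ?_ ?_))
  · intro a b hab
    apply hi
    simp only [Function.comp] at hab
    have ha := hn a
    have hb := hn b
    rcases h1 : vm a with x | x <;> rcases h2 : vm b with y | y
    · rw [h1, h2] at hab; exact congrArg Sum.inl hab
    · exact absurd h2 hb
    · exact absurd h1 ha
    · rfl
  · rintro (⟨e, he⟩ | (_ | _)) (⟨e', he'⟩ | (_ | _)) f h h' <;> simp [w] at h h'
    · exact congrArg Sum.inl (Subtype.ext (h.trans h'.symm))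
    · exact absurd (h.trans h'.symm) he
    · exact absurd (h'.trans h.symm) he'
    · rfl
  · rintro (e | (_ | _)) x y hxy h
    · simp [w] at h
    · simp [w] at h
    · have hxy := Sym2.eq_iff.mp hxy
      rcases hxy with ⟨rfl, rfl⟩ | ⟨rfl, rfl⟩ <;> rfl
  · rintro (e | (_ | _)) f h <;> simp [w] at h
    · subst h
      exact map_inl_elim _ _
    · subst h
      simp only [subdivide, Sym2.map_mk]
      rw [hab]
      exact Sym2.eq_swap

lemma free_join {H1 H2 : Multigraph} (v1 : H1.V) (v2 : H2.V)
    (π : {e : H1.E // v1 ∈ H1.ends e} ≃ {e : H2.E // v2 ∈ H2.ends e})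
    (hd : H1.deg v1 ≤ 3) (h1 : ¬ Immerses K33 H1) (h2 : ¬ Immerses K33 H2) :
    ¬ Immerses K33 (joinGraph H1 H2 v1 v2 π) := by
  intro hI
  obtain ⟨vm, S, hi, hI⟩ := immerses_iff.mp hI
  have E1 : ∀ e : {e : H1.E // v1 ∉ H1.ends e}, ∃ x y : {x : H1.V // x ≠ v1},
      H1.ends e.1 = s(x.1, y.1) ∧
      (joinGraph H1 H2 v1 v2 π).ends (.inl e) = s(Sum.inl x, Sum.inl y) := by
    intro e
    have h := Sym2.attachWith_map_subtypeVal (s := H1.ends e.1) (P := fun x => x ≠ v1)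
      (fun _ hx hEq => e.2 (hEq ▸ hx))
    simp only [joinGraph]
    revert h
    generalize (H1.ends e.1).attachWith _ = t
    induction t using Sym2.ind with
    | _ x y =>
      intro h
      exact ⟨x, y, h.symm, rfl⟩
  have E2 : ∀ e : {e : H2.E // v2 ∉ H2.ends e}, ∃ x y : {x : H2.V // x ≠ v2},
      H2.ends e.1 = s(x.1, y.1) ∧
      (joinGraph H1 H2 v1 v2 π).ends (.inr (.inl e)) = s(Sum.inr x, Sum.inr y) := by
    intro e
    have h := Sym2.attachWith_map_subtypeVal (s := H2.ends e.1) (P := fun x => x ≠ v2)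
      (fun _ hx hEq => e.2 (hEq ▸ hx))
    simp only [joinGraph]
    revert h
    generalize (H2.ends e.1).attachWith _ = t
    induction t using Sym2.ind with
    | _ x y =>
      intro h
      exact ⟨x, y, h.symm, rfl⟩
  have E3 : ∀ e : {e : H1.E // v1 ∈ H1.ends e}, ∃ (x : {x : H1.V // x ≠ v1})
      (y : {x : H2.V // x ≠ v2}), H1.ends e.1 = s(x.1, v1) ∧ H2.ends (π e).1 = s(v2, y.1) ∧
      (joinGraph H1 H2 v1 v2 π).ends (.inr (.inr e)) = s(Sum.inl x, Sum.inr y) := by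
    intro e
    exact ⟨_, _, (Sym2.other_spec' e.2).symm.trans Sym2.eq_swap,
      (Sym2.other_spec' (π e).2).symm, rfl⟩
  let F : Finset (joinGraph H1 H2 v1 v2 π).E :=
    Finset.univ.image (fun e : {e : H1.E // v1 ∈ H1.ends e} => Sum.inr (Sum.inr e))
  have hF : F.card ≤ 3 := by
    refine Finset.card_image_le.trans ?_
    rw [Finset.card_univ, Fintype.card_subtype]
    exact hd
  have hcut : ∀ (e : (joinGraph H1 H2 v1 v2 π).E) (u v : (joinGraph H1 H2 v1 v2 π).V),
      (joinGraph H1 H2 v1 v2 π).ends e = s(u, v) →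
      Sum.isLeft u = true → ¬ Sum.isLeft v = true → e ∈ F := by
    rintro (e | (e | e)) u v h hu hv
    · obtain ⟨x, y, -, hxy⟩ := E1 e
      rw [hxy] at h
      have h := Sym2.eq_iff.mp h
      rcases h with ⟨rfl, rfl⟩ | ⟨rfl, rfl⟩ <;>
        first | exact absurd rfl hv | exact absurd hu Bool.false_ne_true
    · obtain ⟨x, y, -, hxy⟩ := E2 e
      rw [hxy] at h
      have h := Sym2.eq_iff.mp h
      rcases h with ⟨rfl, rfl⟩ | ⟨rfl, rfl⟩ <;>
        first | exact absurd rfl hv | exact absurd hu Bool.false_ne_true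
    · exact Finset.mem_image_of_mem _ (Finset.mem_univ _)
  rcases k33_cut3 hI (fun x => Sum.isLeft x = true) F hcut hF with h | h
  · let φ : (joinGraph H1 H2 v1 v2 π).V → H1.V := Sum.elim (fun x => x.1) (fun _ => v1)
    let w : (joinGraph H1 H2 v1 v2 π).E → Option H1.E :=
      Sum.elim (fun e => some e.1) (Sum.elim (fun _ => none) (fun e => some e.1))
    refine h1 (hI.comp φ _ ?_ (imm_of_partial φ w ?_ ?_ ?_))
    · intro a b hab
      simp only [Function.comp] at hab
      rcases ha : vm a with x | x <;> rcases hb : vm b with y | y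
      · rw [ha, hb] at hab
        apply hi
        rw [ha, hb]
        exact congrArg Sum.inl (Subtype.ext hab)
      · rw [ha, hb] at hab
        exact absurd hab x.2
      · rw [ha, hb] at hab
        exact absurd hab.symm y.2
      · exact h a b (by rw [ha]; simp) (by rw [hb]; simp)
    · rintro (⟨e, he⟩ | (e | ⟨e, he⟩)) (⟨e', he'⟩ | (e' | ⟨e', he'⟩)) f h h' <;>
        simp [w] at h h' <;> subst h <;> subst h' <;> first | rfl | contradiction
    · rintro (e | (e | e)) a b hab h
      · simp [w] at h
      · obtain ⟨x, y, -, hxy⟩ := E2 e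
        rw [hxy] at hab
        have hab := Sym2.eq_iff.mp hab
        rcases hab with ⟨rfl, rfl⟩ | ⟨rfl, rfl⟩ <;> rfl
      · simp [w] at h
    · rintro (e | (e | e)) f h <;> simp [w] at h
      · obtain ⟨x, y, hxy, hxy'⟩ := E1 e
        rw [← h, hxy, hxy']
        rfl
      · obtain ⟨x, y, hxy, -, hxy'⟩ := E3 e
        rw [← h, hxy, hxy']
        rfl
  · let φ : (joinGraph H1 H2 v1 v2 π).V → H2.V := Sum.elim (fun _ => v2) (fun x => x.1)
    let w : (joinGraph H1 H2 v1 v2 π).E → Option H2.E :=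
      Sum.elim (fun _ => none) (Sum.elim (fun e => some e.1) (fun e => some (π e).1))
    refine h2 (hI.comp φ _ ?_ (imm_of_partial φ w ?_ ?_ ?_))
    · intro a b hab
      simp only [Function.comp] at hab
      rcases ha : vm a with x | x <;> rcases hb : vm b with y | y
      · exact h a b (by rw [ha]; simp) (by rw [hb]; simp)
      · rw [ha, hb] at hab
        exact absurd hab.symm y.2
      · rw [ha, hb] at hab
        exact absurd hab x.2
      · rw [ha, hb] at hab
        apply hi
        rw [ha, hb]
        exact congrArg Sum.inr (Subtype.ext hab)
    · rintro (e | (e | e)) (e' | (e' | e')) f h h' <;> simp [w] at h h'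
      · exact congrArg (fun t => Sum.inr (Sum.inl t)) (Subtype.ext (h.trans h'.symm))
      · exact absurd (by rw [h, ← h']; exact (π e').2) e.2
      · exact absurd (by rw [h', ← h]; exact (π e).2) e'.2
      · exact congrArg (fun t => Sum.inr (Sum.inr t))
          (π.injective (Subtype.ext (h.trans h'.symm)))
    · rintro (e | (e | e)) a b hab h
      · obtain ⟨x, y, -, hxy⟩ := E1 e
        rw [hxy] at hab
        have hab := Sym2.eq_iff.mp hab
        rcases hab with ⟨rfl, rfl⟩ | ⟨rfl, rfl⟩ <;> rfl
      · simp [w] at h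
      · simp [w] at h
    · rintro (e | (e | e)) f h <;> simp [w] at h
      · obtain ⟨x, y, hxy, hxy'⟩ := E2 e
        rw [← h, hxy, hxy']
        rfl
      · obtain ⟨x, y, -, hxy, hxy'⟩ := E3 e
        rw [← h, hxy, hxy']
        rfl

lemma free_of_built {G : Multigraph} (h : Built G) : ¬ Immerses K33 G := by
  induction h with
  | base G _ h => exact h
  | join H1 H2 v1 v2 π _ _ hd _ _ _ h1 h2 => exact free_join v1 v2 π hd h1 h2
  | union G1 G2 _ _ h1 h2 => exact free_union h1 h2
  | subdiv G e0 a b hab _ h => exact free_subdivide e0 a b hab h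
  | pendant G u k hk _ h => exact free_pendant u k (by omega) h
  | iso G1 G2 _ i h => exact free_iso h i

end Multigraph
namespace Multigraph

lemma tripod {G : Multigraph} {S : Set G.E} (t : Fin 3 → G.V)
    (h : ∀ i j, Reach G S (t i) (t j)) :
    ∃ x, ∃ Q : Fin 3 → Set G.E, (∀ i, Q i ⊆ S) ∧ (∀ i j, i ≠ j → Disjoint (Q i) (Q j)) ∧
      ∀ i, Reach G (Q i) x (t i) := by
  obtain ⟨p, hp, hpS⟩ := (h 0 1).exists_path
  have key : ∀ y, Reach G S (t 0) y →
      ∃ x ∈ p.support, Reach G {e | e ∈ S ∧ e ∉ p.edges} x y := by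
    intro y hy
    induction hy with
    | refl => exact ⟨t 0, p.start_mem, .refl _⟩
    | @tail y z _ hyz ih =>
      obtain ⟨f, hf, hyz⟩ := hyz
      obtain ⟨x, hx, hr⟩ := ih
      by_cases hfp : f ∈ p.edges
      · exact ⟨z, p.mem_support_of_edge hfp (by rw [hyz]; simp), .refl _⟩
      · exact ⟨x, hx, hr.trans (.single (e := f) ⟨hf, hfp⟩ hyz)⟩
  obtain ⟨x, hx, hr⟩ := key (t 2) (h 0 2)
  obtain ⟨q, r, hqr, -⟩ := p.split hx
  have hnd := p.edges_nodup hp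
  rw [hqr, List.nodup_append] at hnd
  have d01 : Disjoint {e | e ∈ q.edges} {e | e ∈ r.edges} := by
    rw [Set.disjoint_left]
    intro e he he'
    exact hnd.2.2 e he e he' rfl
  have d02 : Disjoint {e | e ∈ q.edges} {e | e ∈ S ∧ e ∉ p.edges} := by
    rw [Set.disjoint_left]
    intro e he he'
    refine he'.2 ?_
    rw [hqr]
    exact List.mem_append_left _ he
  have d12 : Disjoint {e | e ∈ r.edges} {e | e ∈ S ∧ e ∉ p.edges} := by
    rw [Set.disjoint_left]
    intro e he he'
    refine he'.2 ?_
    rw [hqr]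
    exact List.mem_append_right _ he
  refine ⟨x, ![{e | e ∈ q.edges}, {e | e ∈ r.edges}, {e | e ∈ S ∧ e ∉ p.edges}], ?_, ?_, ?_⟩
  · intro i
    fin_cases i
    · intro e he
      exact hpS e (by rw [hqr]; exact List.mem_append_left _ he)
    · intro e he
      exact hpS e (by rw [hqr]; exact List.mem_append_right _ he)
    · intro e he
      exact he.1
  · intro i j hij
    fin_cases i <;> fin_cases j
    · exact absurd rfl hij
    · exact d01
    · exact d02
    · exact d01.symm
    · exact absurd rfl hij
    · exact d12
    · exact d02.symm
    · exact d12.symm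
    · exact absurd rfl hij
  · intro i
    fin_cases i
    · exact q.reach.symm
    · exact r.reach
    · exact hr

/-- Isomorphism from bijective maps. -/
noncomputable def Iso.mk' {G1 G2 : Multigraph} (f : G1.V → G2.V) (hf : Function.Bijective f)
    (g : G1.E → G2.E) (hg : Function.Bijective g)
    (h : ∀ e, G2.ends (g e) = (G1.ends e).map f) : Iso G1 G2 where
  vequiv := Equiv.ofBijective f hf
  eequiv := Equiv.ofBijective g hg
  ends_eq e := h e

open Classical in
/-- Induced subgraph. -/
noncomputable def induce (G : Multigraph) (P : G.V → Prop) : Multigraph where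
  V := {x // P x}
  E := {e // ∀ x ∈ G.ends e, P x}
  ends e := (G.ends e.1).attachWith e.2
  noLoop e := by
    intro hd
    apply G.noLoop e.1
    rw [← Sym2.attachWith_map_subtypeVal (s := G.ends e.1) (P := P) e.2]
    exact (Sym2.isDiag_map_iff' Subtype.val_injective _).mpr hd

lemma induce_ends (G : Multigraph) (P : G.V → Prop) (e : (induce G P).E) :
    ((induce G P).ends e).map (Subtype.val : {x // P x} → G.V) = G.ends e.1 :=
  Sym2.attachWith_map_subtypeVal (s := G.ends e.1) (P := P) e.2

lemma induce_free {G : Multigraph} (P : G.V → Prop) (h : ¬ Immerses K33 G) :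
    ¬ Immerses K33 (induce G P) := by
  intro hI
  refine h (hI.comp (fun x : {x // P x} => x.1) _ Subtype.val_injective
    (imm_of_partial _ (fun e : {e // ∀ x ∈ G.ends e, P x} => some e.1) ?_ ?_ ?_))
  · intro e e' f h h'
    exact Subtype.ext ((Option.some.inj h).trans (Option.some.inj h').symm)
  · intro e a b _ h
    simp at h
  · intro e f h
    rw [← Option.some.inj h]
    exact (induce_ends G P e).symm

lemma map_elim_inl {α β γ : Type} (f : α → γ) (g : β → γ) (s : Sym2 α) :
    (s.map (Sum.inl : α → α ⊕ β)).map (Sum.elim f g) = s.map f := by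
  induction s using Sym2.ind with
  | _ x y => rfl

lemma map_elim_inr {α β γ : Type} (f : α → γ) (g : β → γ) (s : Sym2 β) :
    (s.map (Sum.inr : β → α ⊕ β)).map (Sum.elim f g) = s.map g := by
  induction s using Sym2.ind with
  | _ x y => rfl

lemma built_union {G : Multigraph} (P : G.V → Prop)
    (hcut : ∀ e u v, G.ends e = s(u, v) → P u → P v)
    (h1 : Built (induce G P)) (h2 : Built (induce G (fun x => ¬ P x))) : Built G := by
  have hJ := Built.union _ _ h1 h2
  refine (fun (hf : Function.Bijective
      (Sum.elim Subtype.val Subtype.val : {x // P x} ⊕ {x // ¬ P x} → G.V))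
    (hg : Function.Bijective (Sum.elim Subtype.val Subtype.val :
      {e // ∀ x ∈ G.ends e, P x} ⊕ {e // ∀ x ∈ G.ends e, ¬ P x} → G.E)) hh =>
    Built.iso _ _ hJ (Iso.mk' _ hf _ hg hh)) ⟨?_, ?_⟩ ⟨?_, ?_⟩ ?_
  · rintro (⟨a, ha⟩ | ⟨a, ha⟩) (⟨b, hb⟩ | ⟨b, hb⟩) h <;> simp at h <;> subst h <;>
      first | rfl | contradiction
  · intro x
    by_cases hx : P x
    · exact ⟨Sum.inl ⟨x, hx⟩, rfl⟩
    · exact ⟨Sum.inr ⟨x, hx⟩, rfl⟩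
  · rintro (⟨a, ha⟩ | ⟨a, ha⟩) (⟨b, hb⟩ | ⟨b, hb⟩) h <;> simp at h <;> subst h
    · rfl
    · obtain ⟨x, y, hxy⟩ := G.exists_ends a
      exact absurd (ha x (by simp [hxy])) (hb x (by simp [hxy]))
    · obtain ⟨x, y, hxy⟩ := G.exists_ends a
      exact absurd (hb x (by simp [hxy])) (ha x (by simp [hxy]))
    · rfl
  · intro e
    obtain ⟨u, v, huv⟩ := G.exists_ends e
    have h1 := hcut e u v huv
    have h2 := hcut e v u (huv.trans Sym2.eq_swap)
    by_cases hu : P u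
    · refine ⟨Sum.inl ⟨e, ?_⟩, rfl⟩
      intro x hx
      rw [huv, Sym2.mem_iff] at hx
      rcases hx with rfl | rfl <;> tauto
    · refine ⟨Sum.inr ⟨e, ?_⟩, rfl⟩
      intro x hx
      rw [huv, Sym2.mem_iff] at hx
      rcases hx with rfl | rfl <;> tauto
  · rintro (e | e)
    · exact (induce_ends G P e).symm.trans (map_elim_inl _ _ _).symm
    · exact (induce_ends G _ e).symm.trans (map_elim_inr _ _ _).symm

lemma built_pendant {G : Multigraph} (x u : G.V) (hux : u ≠ x) (k : ℕ) (hk : k = 1 ∨ k = 2)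
    (g : Fin k ≃ {e // x ∈ G.ends e}) (hx : ∀ e, x ∈ G.ends e → G.ends e = s(u, x))
    (h : Built (induce G (fun y => y ≠ x))) : Built G := by
  have hJ := Built.pendant _ (⟨u, hux⟩ : {y // y ≠ x}) k hk h
  refine (fun (hf : Function.Bijective
      (Sum.elim Subtype.val (fun _ => x) : {y // y ≠ x} ⊕ Unit → G.V))
    (hg : Function.Bijective (Sum.elim Subtype.val (fun i => (g i).1) :
      {e // ∀ y ∈ G.ends e, y ≠ x} ⊕ Fin k → G.E)) hh =>
    Built.iso _ _ hJ (Iso.mk' _ hf _ hg hh)) ⟨?_, ?_⟩ ⟨?_, ?_⟩ ?_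
  · rintro (⟨a, ha⟩ | a) (⟨b, hb⟩ | b) h <;> simp at h
    · subst h; rfl
    · exact absurd h ha
    · exact absurd h.symm hb
    · rfl
  · intro y
    by_cases hy : y = x
    · exact ⟨Sum.inr (), hy.symm⟩
    · exact ⟨Sum.inl ⟨y, hy⟩, rfl⟩
  · rintro (⟨a, ha⟩ | a) (⟨b, hb⟩ | b) h <;> simp at h
    · subst h; rfl
    · subst h; exact absurd rfl (ha x (g b).2)
    · subst h; exact absurd rfl (hb x (g a).2)
    · exact congrArg Sum.inr (g.injective (Subtype.ext h))
  · intro e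
    by_cases he : x ∈ G.ends e
    · exact ⟨Sum.inr (g.symm ⟨e, he⟩), by simp⟩
    · exact ⟨Sum.inl ⟨e, fun y hy hyx => he (hyx ▸ hy)⟩, rfl⟩
  · rintro (e | e)
    · exact (induce_ends G _ e).symm.trans (map_elim_inl _ _ _).symm
    · exact hx _ (g e).2

/-- Adding one edge. -/
def addEdge (G : Multigraph) (a b : G.V) (hab : a ≠ b) : Multigraph where
  V := G.V
  E := Option G.E
  ends e := match e with
    | none => s(a, b)
    | some e => G.ends e
  noLoop e := match e with
    | none => by simpa [Sym2.mk_isDiag_iff] using hab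
    | some e => G.noLoop e

/-- Suppress the degree-two vertex `x`. -/
noncomputable def suppress {G : Multigraph} (x a b : G.V) (hax : a ≠ x) (hbx : b ≠ x)
    (hab : a ≠ b) : Multigraph :=
  addEdge (induce G (fun y => y ≠ x)) (⟨a, hax⟩ : {y // y ≠ x}) (⟨b, hbx⟩ : {y // y ≠ x})
    (fun h => hab (congrArg Subtype.val h))

lemma suppress_free {G : Multigraph} (x a b : G.V) (hax : a ≠ x) (hbx : b ≠ x) (hab : a ≠ b)
    (e1 e2 : G.E) (hne : e1 ≠ e2) (he1 : G.ends e1 = s(a, x)) (he2 : G.ends e2 = s(b, x))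
    (h : ¬ Immerses K33 G) : ¬ Immerses K33 (suppress x a b hax hbx hab) := by
  intro hI
  have hx1 : x ∈ G.ends e1 := by simp [he1]
  have hx2 : x ∈ G.ends e2 := by simp [he2]
  let W : Option {e // ∀ y ∈ G.ends e, y ≠ x} → Set G.E := fun e =>
    {f | (∃ e', e = some e' ∧ f = e'.1) ∨ (e = none ∧ (f = e1 ∨ f = e2))}
  refine h (hI.comp (fun y : {y // y ≠ x} => y.1) W Subtype.val_injective ⟨?_, ?_⟩)
  · rintro (_ | e) (_ | e') hee <;> rw [Set.disjoint_left]
    · exact absurd rfl hee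
    · rintro f (⟨_, h, -⟩ | ⟨-, h⟩) (⟨g, h', hf⟩ | ⟨h', -⟩)
      · cases h
      · cases h
      · rcases h with rfl | rfl
        · exact g.2 x (hf ▸ hx1) rfl
        · exact g.2 x (hf ▸ hx2) rfl
      · cases h'
    · rintro f (⟨g, h', hf⟩ | ⟨h', -⟩) (⟨_, h, -⟩ | ⟨-, h⟩)
      · cases h
      · rcases h with rfl | rfl
        · exact g.2 x (hf ▸ hx1) rfl
        · exact g.2 x (hf ▸ hx2) rfl
      · cases h'
      · cases h'
    · rintro f (⟨g, h, hf⟩ | ⟨h, -⟩) (⟨g', h', hf'⟩ | ⟨h', -⟩)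
      · apply hee
        rw [h, h']
        exact congrArg some (Subtype.ext (hf.symm.trans hf'))
      · cases h'
      · cases h
      · cases h
  · rintro (_ | e) u v huv
    · have R : Reach G (W none) a b :=
        (Reach.single (e := e1) (Or.inr ⟨rfl, Or.inl rfl⟩) he1).trans
          (Reach.single (e := e2) (Or.inr ⟨rfl, Or.inr rfl⟩) (he2.trans Sym2.eq_swap))
      have huv := Sym2.eq_iff.mp huv
      rcases huv with ⟨rfl, rfl⟩ | ⟨rfl, rfl⟩
      · exact R
      · exact R.symm
    · refine Reach.single (e := e.1) (Or.inl ⟨e, rfl, rfl⟩) ?_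
      rw [← induce_ends G _ e]
      exact congrArg (Sym2.map Subtype.val) huv

lemma built_subdiv {G : Multigraph} (x a b : G.V) (hax : a ≠ x) (hbx : b ≠ x) (hab : a ≠ b)
    (e1 e2 : G.E) (hne : e1 ≠ e2) (hx : ∀ e, x ∈ G.ends e → e = e1 ∨ e = e2)
    (he1 : G.ends e1 = s(a, x)) (he2 : G.ends e2 = s(b, x))
    (h : Built (suppress x a b hax hbx hab)) : Built G := by
  have hx1 : x ∈ G.ends e1 := by simp [he1]
  have hx2 : x ∈ G.ends e2 := by simp [he2]
  have hJ := Built.subdiv (suppress x a b hax hbx hab)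
    (none : Option {e // ∀ y ∈ G.ends e, y ≠ x})
    (⟨a, hax⟩ : {y // y ≠ x}) (⟨b, hbx⟩ : {y // y ≠ x}) rfl h
  refine (fun (hf : Function.Bijective
      (Sum.elim Subtype.val (fun _ => x) : {y // y ≠ x} ⊕ Unit → G.V))
    (hg : Function.Bijective
      (Sum.elim (fun e => (e.1.get (Option.ne_none_iff_isSome.mp e.2)).1)
      (fun t => if t = true then e1 else e2) :
      {o : Option {e // ∀ y ∈ G.ends e, y ≠ x} // o ≠ none} ⊕ Bool → G.E)) hh =>
    Built.iso _ _ hJ (Iso.mk' _ hf _ hg hh)) ⟨?_, ?_⟩ ⟨?_, ?_⟩ ?_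
  · rintro (⟨a, ha⟩ | a) (⟨b, hb⟩ | b) h <;> simp at h
    · subst h; rfl
    · exact absurd h ha
    · exact absurd h.symm hb
    · rfl
  · intro y
    by_cases hy : y = x
    · exact ⟨Sum.inr (), hy.symm⟩
    · exact ⟨Sum.inl ⟨y, hy⟩, rfl⟩
  · rintro (⟨_ | ⟨a, ha⟩, ha'⟩ | (_ | _)) (⟨_ | ⟨b, hb⟩, hb'⟩ | (_ | _)) h <;>
      first | exact absurd rfl ha' | exact absurd rfl hb' | simp at h | rfl
    · subst h; rfl
    · subst h; exact absurd rfl (ha x hx2)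
    · subst h; exact absurd rfl (ha x hx1)
    · subst h; exact absurd rfl (hb x hx2)
    · rfl
    · exact absurd h.symm hne
    · subst h; exact absurd rfl (hb x hx1)
    · exact absurd h hne
    · rfl
  · intro e
    by_cases he : x ∈ G.ends e
    · rcases hx e he with rfl | rfl
      · exact ⟨Sum.inr true, rfl⟩
      · exact ⟨Sum.inr false, rfl⟩
    · exact ⟨Sum.inl ⟨some ⟨e, fun y hy hyx => he (hyx ▸ hy)⟩, by simp⟩, rfl⟩
  · rintro (⟨_ | e, he⟩ | (_ | _))
    · exact absurd rfl he
    · exact (induce_ends G _ e).symm.trans (map_elim_inl _ _ _).symm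
    · exact he2
    · exact he1

end Multigraph
namespace Multigraph

open Classical in
/-- Contract everything outside `P` to `none`. -/
noncomputable def cm {α : Type} (P : α → Prop) (x : α) : Option {x // P x} :=
  if h : P x then some ⟨x, h⟩ else none

lemma cm_pos {α : Type} {P : α → Prop} {x : α} (h : P x) : cm P x = some ⟨x, h⟩ := dif_pos h

lemma cm_neg {α : Type} {P : α → Prop} {x : α} (h : ¬ P x) : cm P x = none := dif_neg h

lemma cm_eq_none {α : Type} {P : α → Prop} {x : α} : cm P x = none ↔ ¬ P x := by
  by_cases h : P x
  · simp [cm_pos h, h]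
  · simp [cm_neg h, h]

open Classical in
/-- Contraction of the complement of `P` to a single vertex. -/
noncomputable def contract (G : Multigraph) (P : G.V → Prop) : Multigraph where
  V := Option {x // P x}
  E := {e // ¬ ((G.ends e).map (cm P)).IsDiag}
  ends e := (G.ends e.1).map (cm P)
  noLoop e := e.2

/-- Edges crossing from `P` to its complement. -/
def CE (G : Multigraph) (P : G.V → Prop) (e : G.E) : Prop :=
  ∃ u v, G.ends e = s(u, v) ∧ P u ∧ ¬ P v

lemma CE_not {G : Multigraph} {P : G.V → Prop} {e : G.E} :
    CE G P e ↔ CE G (fun x => ¬ P x) e := by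
  constructor
  · rintro ⟨u, v, h, hu, hv⟩
    exact ⟨v, u, h.trans Sym2.eq_swap, hv, not_not.mpr hu⟩
  · rintro ⟨u, v, h, hu, hv⟩
    exact ⟨v, u, h.trans Sym2.eq_swap, not_not.mp hv, hu⟩

lemma CE.notDiag {G : Multigraph} {P : G.V → Prop} {e : G.E} (h : CE G P e) :
    ¬ ((G.ends e).map (cm P)).IsDiag := by
  obtain ⟨u, v, h, hu, hv⟩ := h
  rw [h, Sym2.map_mk, Sym2.mk_isDiag_iff, cm_pos hu, cm_neg hv]
  simp

lemma CE_iff {G : Multigraph} {P : G.V → Prop} {e : G.E}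
    (he : ¬ ((G.ends e).map (cm P)).IsDiag) :
    none ∈ (G.ends e).map (cm P) ↔ CE G P e := by
  constructor
  · intro h
    obtain ⟨u, v, huv⟩ := G.exists_ends e
    rw [huv, Sym2.map_mk, Sym2.mk_isDiag_iff] at he
    rw [huv, Sym2.map_mk, Sym2.mem_iff] at h
    rcases h with h | h
    · have hu := cm_eq_none.mp h.symm
      rw [← h, eq_comm, cm_eq_none, not_not] at he
      exact ⟨v, u, huv.trans Sym2.eq_swap, he, hu⟩
    · have hv := cm_eq_none.mp h.symm
      rw [← h, cm_eq_none, not_not] at he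
      exact ⟨u, v, huv, he, hv⟩
  · rintro ⟨u, v, h, hu, hv⟩
    rw [h, Sym2.map_mk, Sym2.mem_iff, cm_neg hv]
    exact Or.inr rfl

/-- Edges at the contracted vertex are the crossing edges. -/
def ceEquiv (G : Multigraph) (P : G.V → Prop) :
    {e : (contract G P).E // (none : Option {x // P x}) ∈ (contract G P).ends e} ≃
      {e // CE G P e} where
  toFun e := ⟨e.1.1, (CE_iff e.1.2).mp e.2⟩
  invFun e := ⟨⟨e.1, e.2.notDiag⟩, (CE_iff e.2.notDiag).mpr e.2⟩
  left_inv _ := rfl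
  right_inv _ := rfl

/-- The matching of the crossing edges. -/
def cePi (G : Multigraph) (P : G.V → Prop) :
    {e : (contract G P).E // (none : Option {x // P x}) ∈ (contract G P).ends e} ≃
    {e : (contract G (fun x => ¬ P x)).E //
      (none : Option {x // ¬ P x}) ∈ (contract G (fun x => ¬ P x)).ends e} :=
  ((ceEquiv G P).trans (Equiv.subtypeEquivRight fun _ => CE_not)).trans (ceEquiv G _).symm

lemma deg_eq_card (G : Multigraph) (v : G.V) : G.deg v = Nat.card {e // v ∈ G.ends e} :=
  (Nat.subtype_card _ (fun e => by simp)).symm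

lemma deg_contract (G : Multigraph) (P : G.V → Prop) :
    (contract G P).deg (none : Option {x // P x}) = Nat.card {e // CE G P e} := by
  rw [← Nat.card_congr (ceEquiv G P)]
  exact deg_eq_card _ _

lemma card_contract (G : Multigraph) (P : G.V → Prop) :
    Nat.card (contract G P).V = Nat.card {x // P x} + 1 := Finite.card_option

/-- The vertex underlying an uncontracted vertex. -/
def uncm {α : Type} {P : α → Prop} (x : {x : Option {x // P x} // x ≠ none}) : α :=
  (x.1.get (Option.ne_none_iff_isSome.mp x.2)).1

lemma uncm_eq {α : Type} {P : α → Prop} {x : {x : Option {x // P x} // x ≠ none}} {u : α}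
    (h : x.1 = cm P u) : uncm x = u := by
  obtain ⟨x, hx⟩ := x
  simp only at h
  subst h
  have hu : P u := by
    by_contra hu
    exact hx (cm_neg hu)
  simp [uncm, cm_pos hu]

lemma cm_uncm {α : Type} {P : α → Prop} (x : {x : Option {x // P x} // x ≠ none}) :
    x.1 = cm P (uncm x) := by
  obtain ⟨_ | ⟨x, hx⟩, h⟩ := x
  · exact absurd rfl h
  · exact (cm_pos hx).symm

lemma uncm_prop {α : Type} {P : α → Prop} (x : {x : Option {x // P x} // x ≠ none}) :
    P (uncm x) := (x.1.get _).2

lemma uncm_map {α : Type} {P : α → Prop} (s : Sym2 α)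
    (t : Sym2 {x : Option {x // P x} // x ≠ none})
    (h : t.map Subtype.val = s.map (cm P)) : s = t.map uncm := by
  induction s using Sym2.ind with
  | _ u v =>
  induction t using Sym2.ind with
  | _ x y =>
    rw [Sym2.map_mk, Sym2.map_mk, Sym2.eq_iff] at h
    rw [Sym2.map_mk]
    rcases h with ⟨h1, h2⟩ | ⟨h1, h2⟩
    · rw [uncm_eq h1, uncm_eq h2]
    · rw [uncm_eq h1, uncm_eq h2, Sym2.eq_swap]

lemma uncm_other {α : Type} {P : α → Prop} {u v : α} (hv : ¬ P v)
    (y : {x : Option {x // P x} // x ≠ none})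
    (h : s(none, y.1) = (s(u, v) : Sym2 α).map (cm P)) : uncm y = u := by
  rw [Sym2.map_mk, Sym2.eq_iff, cm_neg hv] at h
  rcases h with ⟨_, h2⟩ | ⟨_, h2⟩
  · exact absurd h2 y.2
  · exact uncm_eq h2

lemma built_join {G : Multigraph} (P : G.V → Prop)
    (hc : Nat.card {e // CE G P e} ≤ 3)
    (hA : 2 ≤ Nat.card {x // P x}) (hB : 2 ≤ Nat.card {x // ¬ P x})
    (h1 : Built (contract G P)) (h2 : Built (contract G (fun x => ¬ P x))) : Built G := by
  have hc' : Nat.card {e // CE G (fun x => ¬ P x) e} ≤ 3 := by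
    rw [← Nat.card_congr (Equiv.subtypeEquivRight fun _ => CE_not)]; exact hc
  have hJ := Built.join _ _ (none : Option {x // P x}) (none : Option {x // ¬ P x})
    (cePi G P)
    (by rw [← Nat.card_eq_fintype_card, card_contract]; omega)
    (by rw [← Nat.card_eq_fintype_card, card_contract]; omega)
    (by rw [deg_contract]; exact hc) (by rw [deg_contract]; exact hc') h1 h2
  refine (fun (hf : Function.Bijective
      (Sum.elim uncm uncm : {x : Option {x // P x} // x ≠ none} ⊕
      {x : Option {x // ¬ P x} // x ≠ none} → G.V))
    (hg : Function.Bijective (Sum.elim (fun e => e.1.1) (Sum.elim (fun e => e.1.1) (fun e => e.1.1)) :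
      {e : (contract G P).E // (none : Option {x // P x}) ∉ (contract G P).ends e} ⊕
      {e : (contract G (fun x => ¬ P x)).E //
        (none : Option {x // ¬ P x}) ∉ (contract G (fun x => ¬ P x)).ends e} ⊕
      {e : (contract G P).E // (none : Option {x // P x}) ∈ (contract G P).ends e} → G.E)) hh =>
    Built.iso _ _ hJ (Iso.mk' _ hf _ hg hh)) ⟨?_, ?_⟩ ⟨?_, ?_⟩ ?_
  · rintro (a | a) (b | b) h <;> simp only [Sum.elim_inl, Sum.elim_inr] at h
    · exact congrArg Sum.inl (Subtype.ext (by rw [cm_uncm a, cm_uncm b, h]))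
    · exact absurd (h ▸ uncm_prop a) (uncm_prop b)
    · exact absurd (h ▸ uncm_prop b) (uncm_prop a)
    · exact congrArg Sum.inr (Subtype.ext (by rw [cm_uncm a, cm_uncm b, h]))
  · intro x
    by_cases hx : P x
    · exact ⟨Sum.inl ⟨some ⟨x, hx⟩, Option.some_ne_none _⟩, rfl⟩
    · exact ⟨Sum.inr ⟨some ⟨x, hx⟩, Option.some_ne_none _⟩, rfl⟩
  · have key : ∀ (e : G.E) (h : ¬ ((G.ends e).map (cm P)).IsDiag)
        (h' : ¬ ((G.ends e).map (cm (fun x => ¬ P x))).IsDiag), CE G P e := by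
      intro e h h'
      obtain ⟨u, v, huv⟩ := G.exists_ends e
      rw [huv, Sym2.map_mk, Sym2.mk_isDiag_iff] at h h'
      by_cases hu : P u <;> by_cases hv : P v
      · exact absurd (by rw [cm_neg (P := fun x => ¬ P x) (not_not.mpr hu),
          cm_neg (P := fun x => ¬ P x) (not_not.mpr hv)]) h'
      · exact ⟨u, v, huv, hu, hv⟩
      · exact ⟨v, u, huv.trans Sym2.eq_swap, hv, hu⟩
      · exact absurd (by rw [cm_neg hu, cm_neg hv]) h
    rintro (⟨⟨a, ha⟩, ha'⟩ | (⟨⟨a, ha⟩, ha'⟩ | ⟨⟨a, ha⟩, ha'⟩))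
      (⟨⟨b, hb⟩, hb'⟩ | (⟨⟨b, hb⟩, hb'⟩ | ⟨⟨b, hb⟩, hb'⟩)) h <;>
      simp only [Sum.elim_inl, Sum.elim_inr] at h <;> subst h
    · rfl
    · exact absurd ((CE_iff ha).mpr (key a ha hb)) ha'
    · exact absurd hb' ha'
    · exact absurd ((CE_iff hb).mpr (key a hb ha)) hb'
    · rfl
    · exact absurd ((CE_iff ha).mpr (CE_not.mp (key a hb ha))) ha'
    · exact absurd ha' hb'
    · exact absurd ((CE_iff hb).mpr (CE_not.mp (key a ha hb))) hb'
    · rfl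
  · intro e
    by_cases he : CE G P e
    · exact ⟨Sum.inr (Sum.inr ⟨⟨e, he.notDiag⟩, (CE_iff he.notDiag).mpr he⟩), rfl⟩
    · have he2 : ¬ CE G (fun x => ¬ P x) e := fun h => he (CE_not.mpr h)
      by_cases hd : ((G.ends e).map (cm P)).IsDiag
      · have hd2 : ¬ ((G.ends e).map (cm (fun x => ¬ P x))).IsDiag := by
          have hl := G.noLoop e
          obtain ⟨u, v, huv⟩ := G.exists_ends e
          rw [huv, Sym2.mk_isDiag_iff] at hl
          rw [huv, Sym2.map_mk, Sym2.mk_isDiag_iff] at hd ⊢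
          by_cases hu : P u
          · rw [cm_pos hu] at hd
            by_cases hv : P v
            · rw [cm_pos hv] at hd
              exact absurd (congrArg Subtype.val (Option.some.inj hd)) hl
            · rw [cm_neg hv] at hd
              cases hd
          · have hv : ¬ P v := by
              rw [cm_neg hu] at hd
              exact cm_eq_none.mp hd.symm
            rw [cm_pos (P := fun x => ¬ P x) hu, cm_pos (P := fun x => ¬ P x) hv]
            intro h
            exact hl (congrArg Subtype.val (Option.some.inj h))
        exact ⟨Sum.inr (Sum.inl ⟨⟨e, hd2⟩, fun h => he2 ((CE_iff hd2).mp h)⟩), rfl⟩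
      · exact ⟨Sum.inl ⟨⟨e, hd⟩, fun h => he ((CE_iff hd).mp h)⟩, rfl⟩
  · rintro (e | (e | e))
    · exact (uncm_map _ _ (Sym2.attachWith_map_subtypeVal (s := (contract G P).ends e.1)
        (P := fun x => x ≠ none) (fun _ hx hEq => e.2 (hEq ▸ hx)))).trans
        (map_elim_inl _ _ _).symm
    · exact (uncm_map _ _ (Sym2.attachWith_map_subtypeVal
        (s := (contract G (fun x => ¬ P x)).ends e.1)
        (P := fun x => x ≠ none) (fun _ hx hEq => e.2 (hEq ▸ hx)))).trans
        (map_elim_inr _ _ _).symm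
    · obtain ⟨u, v, huv, hu, hv⟩ := (CE_iff e.1.2).mp e.2
      have h1 := Sym2.other_spec' e.2
      have h2 := Sym2.other_spec' (cePi G P e).2
      have h1' : _ = Sym2.map (cm P) (G.ends e.1.1) := h1
      have h2' : _ = Sym2.map (cm (fun x => ¬ P x)) (G.ends e.1.1) := h2
      rw [huv] at h1' h2'
      rw [Sym2.eq_swap (a := u)] at h2'
      refine huv.trans ?_
      refine Sym2.eq_iff.mpr (Or.inl ⟨?_, ?_⟩)
      · exact (uncm_other hv ⟨_, _⟩ h1').symm
      · exact (uncm_other (P := fun x => ¬ P x) (not_not.mpr hu) ⟨_, _⟩ h2').symm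

lemma contract_free {G : Multigraph} (P : G.V → Prop)
    (hconn : ∀ y z, ¬ P y → ¬ P z → Reach G {e | ∀ x ∈ G.ends e, ¬ P x} y z)
    (hc : Nat.card {e // CE G P e} ≤ 3) (hne : Nonempty {e // CE G P e})
    (h : ¬ Immerses K33 G) : ¬ Immerses K33 (contract G P) := by
  classical
  intro hI
  have : Nonempty ({e // CE G P e} ↪ Fin 3) :=
    Function.Embedding.nonempty_of_card_le (by
      rw [← Nat.card_eq_fintype_card]; simpa using hc)
  obtain ⟨c⟩ := this
  choose ae be hae hPa hPb using fun d : {e // CE G P e} => d.2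
  obtain ⟨x, Q, hQS, hQd, hQr⟩ := tripod (fun i => be (Function.invFun c i))
    (fun i j => hconn _ _ (hPb _) (hPb _))
  have hx : ¬ P x := by
    intro hx
    obtain ⟨e, he, a, b, hab, ha, -⟩ := (hQr 0).exists_cross P hx (hPb _)
    exact hQS 0 he a (by simp [hab]) ha
  let φ : Option {x // P x} → G.V := fun o => o.elim x Subtype.val
  have φpos : ∀ u, P u → φ (cm P u) = u := fun u hu => by rw [cm_pos hu]; rfl
  have φneg : ∀ u, ¬ P u → φ (cm P u) = x := fun u hu => by rw [cm_neg hu]; rfl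
  let W : {e // ¬ ((G.ends e).map (cm P)).IsDiag} → Set G.E := fun e =>
    {f | f = e.1 ∨ ∃ h : CE G P e.1, f ∈ Q (c ⟨e.1, h⟩)}
  have hWQ : ∀ (e : {e // ¬ ((G.ends e).map (cm P)).IsDiag}) i, e.1 ∉ Q i := by
    intro e i hi
    obtain ⟨u, v, huv⟩ := G.exists_ends e.1
    have hu := hQS i hi u (by simp [huv])
    have hv := hQS i hi v (by simp [huv])
    apply e.2
    rw [huv, Sym2.map_mk, Sym2.mk_isDiag_iff, cm_neg hu, cm_neg hv]
  refine h (hI.comp φ W ?_ ⟨?_, ?_⟩)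
  · rintro (_ | a) (_ | b) hab
    · rfl
    · exact absurd (show P x from (show x = b.1 from hab) ▸ b.2) hx
    · exact absurd (show P x from (show a.1 = x from hab) ▸ a.2) hx
    · exact congrArg some (Subtype.ext hab)
  · intro e e' hee
    rw [Set.disjoint_left]
    rintro f (rfl | ⟨h1, h2⟩) (h3 | ⟨h3, h4⟩)
    · exact hee (Subtype.ext h3)
    · exact hWQ e _ h4
    · subst h3
      exact hWQ e' _ h2
    · refine Set.disjoint_left.mp (hQd _ _ ?_) h2 h4
      intro hcc
      exact hee (Subtype.ext (congrArg (fun d : {e // CE G P e} => d.1) (c.injective hcc)))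
  · intro e a b hab
    have key : ∀ u v, G.ends e.1 = s(u, v) → P u → ¬ P v →
        Reach G (W e) (φ (cm P u)) (φ (cm P v)) := by
      intro u v huv hu hv
      rw [φpos u hu, φneg v hv]
      have hce : CE G P e.1 := ⟨u, v, huv, hu, hv⟩
      have hr := hQr (c ⟨e.1, hce⟩)
      simp only [Function.leftInverse_invFun c.injective _] at hr
      have hb : be ⟨e.1, hce⟩ = v := by
        have h1 := (hae ⟨e.1, hce⟩).symm.trans huv
        rcases Sym2.eq_iff.mp h1 with ⟨h2, h3⟩ | ⟨h2, h3⟩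
        · exact h3
        · exact absurd (h2 ▸ hPa ⟨e.1, hce⟩) hv
      rw [hb] at hr
      refine (Reach.single (e := e.1) (Or.inl rfl) huv).trans (hr.symm.mono ?_)
      intro f hf
      exact Or.inr ⟨hce, hf⟩
    have key2 : ∀ u v, G.ends e.1 = s(u, v) → Reach G (W e) (φ (cm P u)) (φ (cm P v)) := by
      intro u v huv
      by_cases hu : P u <;> by_cases hv : P v
      · rw [φpos u hu, φpos v hv]
        exact Reach.single (e := e.1) (Or.inl rfl) huv
      · exact key u v huv hu hv
      · exact (key v u (huv.trans Sym2.eq_swap) hv hu).symm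
      · rw [φneg u hu, φneg v hv]
        exact .refl _
    obtain ⟨u, v, huv⟩ := G.exists_ends e.1
    have hab' : (G.ends e.1).map (cm P) = s(a, b) := hab
    rw [huv, Sym2.map_mk] at hab'
    rcases Sym2.eq_iff.mp hab' with ⟨rfl, rfl⟩ | ⟨rfl, rfl⟩
    · exact key2 u v huv
    · exact (key2 u v huv).symm

lemma mem_cut {G : Multigraph} {A : Finset G.V} {e : G.E} :
    e ∈ G.cut A ↔ CE G (fun x => x ∈ A) e := by
  simp only [cut, CE, Finset.mem_filter, Finset.mem_univ, true_and, Finset.mem_compl]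
  constructor
  · rintro ⟨u, hu, v, hv, h⟩
    exact ⟨u, v, h, hu, hv⟩
  · rintro ⟨u, v, h, hu, hv⟩
    exact ⟨u, hu, v, hv, h⟩

lemma cut_compl (G : Multigraph) (A : Finset G.V) : G.cut Aᶜ = G.cut A := by
  ext e
  rw [mem_cut, mem_cut, CE_not (P := fun x => x ∈ A)]
  simp [Finset.mem_compl]

lemma card_CE (G : Multigraph) (A : Finset G.V) :
    Nat.card {e // CE G (fun x => x ∈ A) e} = (G.cut A).card := by
  rw [← Nat.card_congr (Equiv.subtypeEquivRight fun e => (mem_cut (A := A) (e := e)))]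
  simp

lemma conn_of_min {G : Multigraph} {A : Finset G.V} (hA : A.Nonempty)
    (hpos : 1 ≤ (G.cut A).card)
    (hmin : ∀ A' : Finset G.V, A'.Nonempty → A' ≠ Finset.univ →
      (G.cut A).card ≤ (G.cut A').card) (y z : G.V) (hy : y ∉ A) (hz : z ∉ A) :
    Reach G {e | ∀ x ∈ G.ends e, x ∉ A} y z := by
  classical
  by_contra hyz
  obtain ⟨a, ha⟩ := hA
  set R := fun w => Reach G {e | ∀ x ∈ G.ends e, x ∉ A} y w with hR
  have hstep : ∀ e u v, G.ends e = s(u, v) → u ∉ A → v ∉ A → R u → R v := by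
    intro e u v huv hu hv hr
    refine Reach.trans hr (Reach.single (e := e) ?_ huv)
    intro x hx
    rw [huv, Sym2.mem_iff] at hx
    rcases hx with rfl | rfl <;> assumption
  let C : Finset G.V := Finset.univ.filter (fun w => w ∉ A ∧ R w)
  let D : Finset G.V := Finset.univ.filter (fun w => w ∉ A ∧ ¬ R w)
  have mC : ∀ w, w ∈ C ↔ w ∉ A ∧ R w := fun w => by simp [C]
  have mD : ∀ w, w ∈ D ↔ w ∉ A ∧ ¬ R w := fun w => by simp [D]
  have hC := hmin C ⟨y, (mC y).mpr ⟨hy, .refl _⟩⟩ (fun h => ((mC a).mp (h ▸ Finset.mem_univ a)).1 ha)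
  have hD := hmin D ⟨z, (mD z).mpr ⟨hz, hyz⟩⟩ (fun h => ((mD a).mp (h ▸ Finset.mem_univ a)).1 ha)
  have kC : ∀ e ∈ G.cut C, ∃ u v, G.ends e = s(u, v) ∧ u ∈ C ∧ v ∈ A := by
    intro e he
    obtain ⟨u, v, huv, hu, hv⟩ := mem_cut.mp he
    refine ⟨u, v, huv, hu, ?_⟩
    by_contra hvA
    have hu' := (mC u).mp hu
    exact hv ((mC v).mpr ⟨hvA, hstep e u v huv hu'.1 hvA hu'.2⟩)
  have kD : ∀ e ∈ G.cut D, ∃ u v, G.ends e = s(u, v) ∧ u ∈ D ∧ v ∈ A := by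
    intro e he
    obtain ⟨u, v, huv, hu, hv⟩ := mem_cut.mp he
    refine ⟨u, v, huv, hu, ?_⟩
    by_contra hvA
    have hu' := (mD u).mp hu
    refine hv ((mD v).mpr ⟨hvA, fun hr => hu'.2 ?_⟩)
    exact hstep e v u (huv.trans Sym2.eq_swap) hvA hu'.1 hr
  have hdisj : Disjoint (G.cut C) (G.cut D) := by
    rw [Finset.disjoint_left]
    intro e he he'
    obtain ⟨u, v, huv, hu, hv⟩ := kC e he
    obtain ⟨u', v', huv', hu', hv'⟩ := kD e he'
    have hu := (mC u).mp hu
    have hu' := (mD u').mp hu'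
    rcases Sym2.eq_iff.mp (huv.symm.trans huv') with ⟨rfl, rfl⟩ | ⟨rfl, rfl⟩
    · exact hu'.2 hu.2
    · exact hu'.1 hv
  have hsub : G.cut C ∪ G.cut D ⊆ G.cut A := by
    intro e he
    rcases Finset.mem_union.mp he with he | he
    · obtain ⟨u, v, huv, hu, hv⟩ := kC e he
      exact mem_cut.mpr ⟨v, u, huv.trans Sym2.eq_swap, hv, ((mC u).mp hu).1⟩
    · obtain ⟨u, v, huv, hu, hv⟩ := kD e he
      exact mem_cut.mpr ⟨v, u, huv.trans Sym2.eq_swap, hv, ((mD u).mp hu).1⟩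
  have := Finset.card_le_card hsub
  rw [Finset.card_union_of_disjoint hdisj] at this
  omega

lemma mem_cut_singleton {G : Multigraph} {x : G.V} {e : G.E} :
    e ∈ G.cut {x} ↔ x ∈ G.ends e := by
  rw [mem_cut]
  constructor
  · rintro ⟨u, v, h, hu, hv⟩
    simp only [Finset.mem_singleton] at hu
    simp [h, hu]
  · intro h
    obtain ⟨v, hv⟩ := Sym2.mem_iff_exists.mp h
    refine ⟨x, v, hv, by simp, ?_⟩
    simp only [Finset.mem_singleton]
    rintro rfl
    exact G.noLoop e (by rw [hv]; exact Sym2.mk_isDiag_iff.mpr rfl)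

lemma built_small {G : Multigraph} (hfree : ¬ Immerses K33 G)
    (ih : ∀ G' : Multigraph, Nat.card G'.V < Nat.card G.V → ¬ Immerses K33 G' → Built G')
    (x : G.V) (h1 : 1 ≤ (G.cut {x}).card) (h2 : (G.cut {x}).card ≤ 2) : Built G := by
  have hlt : Nat.card {y // y ≠ x} < Nat.card G.V :=
    Finite.card_subtype_lt (x := x) (by simp)
  have hind : Built (induce G (fun y => y ≠ x)) := ih _ hlt (induce_free _ hfree)
  have hend : ∀ e, x ∈ G.ends e → ∃ a, a ≠ x ∧ G.ends e = s(a, x) := by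
    intro e he
    obtain ⟨v, hv⟩ := Sym2.mem_iff_exists.mp he
    refine ⟨v, ?_, hv.trans Sym2.eq_swap⟩
    rintro rfl
    exact G.noLoop e (by rw [hv]; exact Sym2.mk_isDiag_iff.mpr rfl)
  have hcard : Fintype.card {e // x ∈ G.ends e} = (G.cut {x}).card := by
    rw [Fintype.card_subtype]
    congr 1
    ext e
    simp [mem_cut_singleton]
  have hk : (G.cut {x}).card = 1 ∨ (G.cut {x}).card = 2 := by omega
  have g : Fin (G.cut {x}).card ≃ {e // x ∈ G.ends e} :=
    (finCongr hcard.symm).trans (Fintype.equivFin _).symm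
  by_cases hall : ∃ u, u ≠ x ∧ ∀ e, x ∈ G.ends e → G.ends e = s(u, x)
  · obtain ⟨u, hux, hu⟩ := hall
    exact built_pendant x u hux _ hk g hu hind
  · rcases hk with hk | hk
    · obtain ⟨e, he⟩ := Finset.card_eq_one.mp hk
      have hxe : x ∈ G.ends e := mem_cut_singleton.mp (by simp [he])
      obtain ⟨a, hax, hea⟩ := hend e hxe
      refine absurd ⟨a, hax, fun f hf => ?_⟩ hall
      have : f ∈ G.cut {x} := mem_cut_singleton.mpr hf
      rw [he, Finset.mem_singleton] at this
      rw [this, hea]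
    · obtain ⟨e1, e2, hne, he⟩ := Finset.card_eq_two.mp hk
      have hx1 : x ∈ G.ends e1 := mem_cut_singleton.mp (by simp [he])
      have hx2 : x ∈ G.ends e2 := mem_cut_singleton.mp (by simp [he])
      have hx : ∀ e, x ∈ G.ends e → e = e1 ∨ e = e2 := by
        intro f hf
        have : f ∈ G.cut {x} := mem_cut_singleton.mpr hf
        simpa [he] using this
      obtain ⟨a, hax, ha⟩ := hend e1 hx1
      obtain ⟨b, hbx, hb⟩ := hend e2 hx2
      by_cases hab : a = b
      · subst hab
        refine absurd ⟨a, hax, fun f hf => ?_⟩ hall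
        rcases hx f hf with rfl | rfl <;> assumption
      · exact built_subdiv x a b hax hbx hab e1 e2 hne hx ha hb
          (ih _ hlt (suppress_free x a b hax hbx hab e1 e2 hne ha hb hfree))

lemma exists_bad {G : Multigraph} (h : ¬ G.Internally4EC) :
    ∃ A : Finset G.V, A.Nonempty ∧ A ≠ Finset.univ ∧
      (∀ A' : Finset G.V, A'.Nonempty → A' ≠ Finset.univ → (G.cut A).card ≤ (G.cut A').card) ∧
      ((G.cut A).card ≤ 2 ∨ ((G.cut A).card = 3 ∧ A.card ≠ 1 ∧ Aᶜ.card ≠ 1)) := by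
  by_cases h3 : G.EdgeConnGe 3
  · have h : ¬ (∀ A : Finset G.V, A.Nonempty → A ≠ Finset.univ →
        (G.cut A).card = 3 → A.card = 1 ∨ Aᶜ.card = 1) := fun h' => h ⟨h3, h'⟩
    push Not at h
    obtain ⟨A, hA, hA', hc, h1, h2⟩ := h
    refine ⟨A, hA, hA', fun A' hn hu => ?_, Or.inr ⟨hc, h1, h2⟩⟩
    rw [hc]
    exact h3 A' hn hu
  · unfold EdgeConnGe at h3
    push Not at h3
    obtain ⟨A, hA, hA', hc⟩ := h3
    obtain ⟨B, hB, hmin⟩ := Finset.exists_min_image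
      (Finset.univ.filter fun A : Finset G.V => A.Nonempty ∧ A ≠ Finset.univ)
      (fun A => (G.cut A).card) ⟨A, by simp [hA, hA']⟩
    have hB := (Finset.mem_filter.mp hB).2
    have hmin : ∀ A' : Finset G.V, A'.Nonempty → A' ≠ Finset.univ →
        (G.cut B).card ≤ (G.cut A').card := fun A' hn hu => hmin A' (by simp [hn, hu])
    refine ⟨B, hB.1, hB.2, hmin, Or.inl ?_⟩
    have := hmin A hA hA'
    omega

lemma built_of_free (n : ℕ) : ∀ G : Multigraph, Nat.card G.V = n → ¬ Immerses K33 G → Built G := by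
  induction n using Nat.strong_induction_on with
  | _ n ihn =>
  intro G hn hfree
  have ih : ∀ G' : Multigraph, Nat.card G'.V < Nat.card G.V → ¬ Immerses K33 G' → Built G' :=
    fun G' hlt hf => ihn _ (hn ▸ hlt) G' rfl hf
  by_cases h4 : G.Internally4EC
  · exact Built.base G h4 hfree
  obtain ⟨A, hA, hA', hmin, hc⟩ := exists_bad h4
  have hAc : Aᶜ.Nonempty := by
    rw [Finset.nonempty_iff_ne_empty, Ne, Finset.compl_eq_empty_iff]
    exact hA'
  have hAc' : Aᶜ ≠ Finset.univ := by
    rw [Ne, Finset.compl_eq_univ_iff]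
    exact hA.ne_empty
  have hcA : Nat.card {x // x ∈ A} = A.card := by simp
  have hcB : Nat.card {x // x ∉ A} = Aᶜ.card :=
    Nat.subtype_card Aᶜ (by simp)
  have hsum : A.card + Aᶜ.card = Nat.card G.V := by
    rw [Finset.card_add_card_compl, Nat.card_eq_fintype_card]
  have pA := hA.card_pos
  have pB := hAc.card_pos
  by_cases h0 : (G.cut A).card = 0
  · rw [Finset.card_eq_zero] at h0
    refine built_union (fun x => x ∈ A) ?_ (ih _ ?_ (induce_free _ hfree))
      (ih _ ?_ (induce_free _ hfree))
    · intro e u v huv hu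
      by_contra hv
      have : e ∈ G.cut A := mem_cut.mpr ⟨u, v, huv, hu, hv⟩
      simp [h0] at this
    · show Nat.card {x // x ∈ A} < _
      omega
    · show Nat.card {x // x ∉ A} < _
      omega
  by_cases hA1 : A.card = 1
  · obtain ⟨x, rfl⟩ := Finset.card_eq_one.mp hA1
    exact built_small hfree ih x (by omega) (by omega)
  by_cases hB1 : Aᶜ.card = 1
  · obtain ⟨x, hx⟩ := Finset.card_eq_one.mp hB1
    have := G.cut_compl A
    rw [hx] at this
    exact built_small hfree ih x (by rw [this]; omega) (by rw [this]; omega)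
  have hCE3 : Nat.card {e // CE G (fun x => x ∈ A) e} ≤ 3 := by rw [card_CE]; omega
  have hCEn : Nonempty {e // CE G (fun x => x ∈ A) e} := by
    obtain ⟨e, he⟩ := Finset.card_pos.mp (Nat.pos_of_ne_zero h0)
    exact ⟨⟨e, mem_cut.mp he⟩⟩
  refine built_join (fun x => x ∈ A) hCE3 (by rw [hcA]; omega) (by rw [hcB]; omega)
    (ih _ ?_ (contract_free _ ?_ hCE3 hCEn hfree)) (ih _ ?_ (contract_free _ ?_ ?_ ?_ hfree))
  · rw [card_contract, hcA]; omega
  · exact conn_of_min hA (by omega) hmin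
  · rw [card_contract, hcB]; omega
  · intro y z hy hz
    have := conn_of_min hAc (by rw [cut_compl]; omega) (by rw [cut_compl]; exact hmin) y z
      (by simpa using hy) (by simpa using hz)
    simpa [Finset.mem_compl] using this
  · rw [← Nat.card_congr (Equiv.subtypeEquivRight fun _ => CE_not)]; exact hCE3
  · obtain ⟨e⟩ := hCEn
    exact ⟨⟨e.1, CE_not.mp e.2⟩⟩

end Multigraph

open Multigraph in
/-- A graph contains no `K_{3,3}` immersion if and only if it can be obtained
from internally 4-edge-connected `K_{3,3}`-immersion-free graphs by repeatedly
applying joins on vertices of degree at most three, disjoint unions, edge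
subdivisions, and additions of pendant vertices joined by single or double
edges. -/
theorem k33_free_iff_built (G : Multigraph) :
    ¬ Immerses K33 G ↔ Built G := by
  exact ⟨fun h => built_of_free _ G rfl h, fun h => free_of_built h⟩
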